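/- arXiv:math/0612568 — 3 statements merged into one kernel-verified Lean document; each statement's English description precedes it below -/
import Mathlib

section
/- Let $a > 0$ and let $j : \mathbb{R} \to \mathbb{R}$ be twice differentiable on $[0,\infty)$ with $j(t) \ge 0$ for all $t \ge 0$, satisfying the differential inequality $j''(t) \ge a^2 j(t)$ for all $t \ge 0$, and with $\lim_{t \to \infty} j(t) = 0$. Then $j(t) \le j(0)\, e^{-a t}$ for all $t \ge 0$. -/
theorem aux_mono (f f' : ℝ → ℝ) (s : ℝ) (h : ∀ t, s ≤ t → HasDerivAt f (f' t) t)
    (h0 : ∀ t, s ≤ t → 0 ≤ f' t) (t : ℝ) (ht : s ≤ t) : f s ≤ f t := by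
  have hm : MonotoneOn f (Set.Ici s) := by
    apply monotoneOn_of_deriv_nonneg (convex_Ici s)
    · intro x hx
      exact (h x hx).continuousAt.continuousWithinAt
    · intro x hx
      exact (h x (interior_subset hx)).differentiableAt.differentiableWithinAt
    · intro x hx
      rw [(h x (interior_subset hx)).deriv]
      exact h0 x (interior_subset hx)
  exact hm (Set.mem_Ici.2 le_rfl) ht ht

/-- Lemma 4.1 (Rauch): if `j ≥ 0` on `[0,∞)`, `j'' ≥ a² j` on `[0,∞)`, and
`j(t) → 0` as `t → ∞`, then `j(t) ≤ j(0) e^{-a t}` for all `t ≥ 0`. -/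
theorem stmt_0 (a : ℝ) (ha : 0 < a) (j j' j'' : ℝ → ℝ)
    (hj' : ∀ t, 0 ≤ t → HasDerivAt j (j' t) t)
    (hj'' : ∀ t, 0 ≤ t → HasDerivAt j' (j'' t) t)
    (hnonneg : ∀ t, 0 ≤ t → 0 ≤ j t)
    (hineq : ∀ t, 0 ≤ t → a ^ 2 * j t ≤ j'' t)
    (hlim : Filter.Tendsto j Filter.atTop (nhds 0)) :
    ∀ t, 0 ≤ t → j t ≤ j 0 * Real.exp (-a * t) := by
  have hexp : ∀ b t : ℝ, HasDerivAt (fun t => Real.exp (b * t)) (Real.exp (b * t) * b) t := by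
    intro b t
    simpa using ((hasDerivAt_id t).const_mul b).exp
  have key : ∀ s, 0 ≤ s → j' s + a * j s ≤ 0 := by
    intro s hs
    by_contra! hc
    set c := j' s + a * j s with hcdef
    have hu : ∀ t, s ≤ t → c ≤ j' t + a * j t := by
      intro t ht
      have h1 := aux_mono (fun t => (j' t + a * j t) * Real.exp (-a * t)) _ s
        (fun t ht => ((hj'' t (hs.trans ht)).add
          ((hj' t (hs.trans ht)).const_mul a)).mul (hexp (-a) t))
        (fun t ht => by
          have e := Real.exp_pos (-a * t)
          have := hineq t (hs.trans ht)
          have h2 : 0 ≤ (j'' t - a ^ 2 * j t) * Real.exp (-a * t) :=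
            mul_nonneg (by linarith) e.le
          simp only [Pi.add_apply]
          linarith) t ht
      rw [← hcdef] at h1
      have h3 : Real.exp (-a * t) ≤ Real.exp (-a * s) := by
        apply Real.exp_le_exp.2
        nlinarith
      have h4 : c * Real.exp (-a * t) ≤ c * Real.exp (-a * s) :=
        mul_le_mul_of_nonneg_left h3 hc.le
      exact le_of_mul_le_mul_right (h4.trans h1) (Real.exp_pos _)
    have hpos : 0 < min (c / (2 * a)) (c / 2) := by positivity
    obtain ⟨T0, hT0⟩ := Filter.eventually_atTop.1 (hlim.eventually (gt_mem_nhds hpos))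
    set T := max T0 s with hT
    have hTs : s ≤ T := le_max_right _ _
    have hTT : T0 ≤ T := le_max_left _ _
    have h1 := aux_mono (fun t => j t - (c / 2) * t) _ T
      (fun t ht => (hj' t (by linarith)).sub ((hasDerivAt_id t).const_mul (c / 2)))
      (fun t ht => by
        have h2 := (hT0 t (by linarith)).trans_le (min_le_left _ _)
        rw [lt_div_iff₀ (by positivity)] at h2
        have := hu t (by linarith)
        linarith) (T + 2) (by linarith)
    have h2 := (hT0 (T + 2) (by linarith)).trans_le (min_le_right _ _)
    have h3 := hnonneg T (by linarith)
    linarith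
  intro t ht
  have h1 := aux_mono (fun t => -(j t * Real.exp (a * t))) _ 0
    (fun t ht => ((hj' t ht).mul (hexp a t)).neg)
    (fun t ht => by
      have h2 : 0 ≤ -(j' t + a * j t) * Real.exp (a * t) :=
        mul_nonneg (by linarith [key t ht]) (Real.exp_pos _).le
      linarith) t ht
  simp only [mul_zero, Real.exp_zero, mul_one] at h1
  have h2 : Real.exp (a * t) * Real.exp (-a * t) = 1 := by
    rw [← Real.exp_add]; simp
  calc j t = j t * Real.exp (a * t) * Real.exp (-a * t) := by rw [mul_assoc, h2, mul_one]
    _ ≤ _ := mul_le_mul_of_nonneg_right (by linarith) (Real.exp_pos _).le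
end

section
/- Let $a > 0$, let $j : \mathbb{R} \to \mathbb{R}$ be twice differentiable on $[0,\infty)$ with $j(t) > 0$ for all $t \ge 0$, and let $c : \mathbb{R} \to \mathbb{R}$ satisfy $c(t) \ge 0$ for all $t \ge 0$. Suppose $j''(t) = j(t)\,(c(t) + a^2)$ for all $t \ge 0$, $\lim_{t \to \infty} j(t) = 0$, and $j(t) \ge j(0)\, e^{-a t}$ for all $t \ge 0$. Then $j(t) = j(0)\, e^{-a t}$ and $c(t) = 0$ for all $t \ge 0$. -/
/-- Scalar rigidity: if `j > 0` on `[0,∞)` satisfies `j'' = j (c + a²)` with `c ≥ 0`,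
`j(t) → 0` as `t → ∞`, and `j(t) ≥ j(0) e^{-a t}` on `[0,∞)`, then
`j(t) = j(0) e^{-a t}` and `c(t) = 0` for all `t ≥ 0`. -/
theorem stmt_8 (a : ℝ) (ha : 0 < a) (j j' j'' c : ℝ → ℝ)
    (hj' : ∀ t, 0 ≤ t → HasDerivAt j (j' t) t)
    (hj'' : ∀ t, 0 ≤ t → HasDerivAt j' (j'' t) t)
    (hpos : ∀ t, 0 ≤ t → 0 < j t)
    (hc : ∀ t, 0 ≤ t → 0 ≤ c t)
    (heq : ∀ t, 0 ≤ t → j'' t = j t * (c t + a ^ 2))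
    (hlim : Filter.Tendsto j Filter.atTop (nhds 0))
    (hlow : ∀ t, 0 ≤ t → j 0 * Real.exp (-a * t) ≤ j t) :
    ∀ t, 0 ≤ t → j t = j 0 * Real.exp (-a * t) ∧ c t = 0 := by
  set g : ℝ → ℝ := fun t => j t - j 0 * Real.exp (-a * t) with hg
  set g1 : ℝ → ℝ := fun t => j' t + a * (j 0 * Real.exp (-a * t)) with hg1
  set g2 : ℝ → ℝ := fun t => j'' t - a ^ 2 * (j 0 * Real.exp (-a * t)) with hg2
  have hexp : ∀ t : ℝ, HasDerivAt (fun t => j 0 * Real.exp (-a * t))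
      (-a * (j 0 * Real.exp (-a * t))) t := by
    intro t
    have h := (((hasDerivAt_id t).const_mul (-a)).exp).const_mul (j 0)
    refine h.congr_deriv ?_
    simp only [id]
    ring
  have hd1 : ∀ t, 0 ≤ t → HasDerivAt g (g1 t) t := by
    intro t ht
    refine ((hj' t ht).sub (hexp t)).congr_deriv ?_
    simp only [hg1]
    ring
  have hd2 : ∀ t, 0 ≤ t → HasDerivAt g1 (g2 t) t := by
    intro t ht
    refine ((hj'' t ht).add ((hexp t).const_mul a)).congr_deriv ?_
    simp only [hg2]
    ring
  have hg0 : g 0 = 0 := by simp [hg]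
  have hgnn : ∀ t, 0 ≤ t → 0 ≤ g t := fun t ht => sub_nonneg.2 (hlow t ht)
  have hg2nn : ∀ t, 0 ≤ t → 0 ≤ g2 t := by
    intro t ht
    have h1 := mul_nonneg (hpos t ht).le (hc t ht)
    have h2 := mul_nonneg (sq_nonneg a) (hgnn t ht)
    simp only [hg2, hg, heq t ht] at *
    nlinarith
  have hconv : ConvexOn ℝ (Set.Ici 0) g := by
    refine convexOn_of_hasDerivWithinAt2_nonneg (f' := g1) (f'' := g2) (convex_Ici 0)
      (fun t ht => (hd1 t ht).continuousAt.continuousWithinAt) ?_ ?_ ?_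
    · intro t ht
      exact (hd1 t (interior_subset ht)).hasDerivWithinAt
    · intro t ht
      exact (hd2 t (interior_subset ht)).hasDerivWithinAt
    · intro t ht
      exact hg2nn t (interior_subset ht)
  have hglim : Filter.Tendsto g Filter.atTop (nhds 0) := by
    have h1 : Filter.Tendsto (fun t : ℝ => -a * t) Filter.atTop Filter.atBot :=
      Filter.tendsto_id.const_mul_atTop_of_neg (neg_lt_zero.2 ha)
    have h2 := (Real.tendsto_exp_atBot.comp h1).const_mul (j 0)
    simpa [hg] using hlim.sub h2
  have hgz : ∀ t, 0 ≤ t → g t = 0 := by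
    intro t ht
    refine le_antisymm ?_ (hgnn t ht)
    refine ge_of_tendsto hglim ?_
    filter_upwards [Filter.eventually_gt_atTop t] with T hT
    have hT0 : 0 < T := ht.trans_lt hT
    have hle : t / T ≤ 1 := (div_le_one hT0).2 hT.le
    have h := hconv.2 (Set.mem_Ici.2 le_rfl) (Set.mem_Ici.2 hT0.le)
      (sub_nonneg.2 hle) (div_nonneg ht hT0.le) (by ring)
    have e : t / T * T = t := div_mul_cancel₀ t hT0.ne'
    simp only [smul_eq_mul, mul_zero, zero_add, hg0, e] at h
    exact h.trans (mul_le_of_le_one_left (hgnn T hT0.le) hle)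
  have key : ∀ f f1 : ℝ → ℝ, (∀ t, 0 ≤ t → HasDerivAt f (f1 t) t) →
      (∀ t, 0 ≤ t → f t = 0) → ∀ t, 0 ≤ t → f1 t = 0 := by
    intro f f1 hf hz t ht
    have h1 := (hf t ht).hasDerivWithinAt (s := Set.Ici 0)
    have h2 : HasDerivWithinAt f 0 (Set.Ici 0) t :=
      (hasDerivWithinAt_const t (Set.Ici 0) (0 : ℝ)).congr (fun x hx => hz x hx) (hz t ht)
    exact (uniqueDiffOn_Ici (0 : ℝ) t ht).eq_deriv _ h1 h2
  have hz1 := key g g1 hd1 hgz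
  have hz2 := key g1 g2 hd2 hz1
  intro t ht
  have e1 : j t = j 0 * Real.exp (-a * t) := sub_eq_zero.1 (hgz t ht)
  refine ⟨e1, ?_⟩
  have e2 : j'' t - a ^ 2 * (j 0 * Real.exp (-a * t)) = 0 := hz2 t ht
  rw [← e1, heq t ht] at e2
  have e3 : j t * c t = 0 := by linarith
  exact (mul_eq_zero.1 e3).resolve_left (hpos t ht).ne'
end

section
/- Let $E$ be a real inner product space, $a > 0$, let $j : \mathbb{R} \to \mathbb{R}$ be twice differentiable on $[0,\infty)$ with $j(t) > 0$ for all $t \ge 0$, and let $U : \mathbb{R} \to E$ be twice differentiable with $\|U(t)\| = 1$ for all $t$. Suppose $j''(t) = j(t)\,(\|U'(t)\|^2 + a^2)$ for all $t \ge 0$, $\lim_{t \to \infty} j(t) = 0$, and $j(t) \ge j(0)\, e^{-a t}$ for all $t \ge 0$. Then $j(t) = j(0)\, e^{-a t}$ and $U'(t) = 0$ for all $t \ge 0$. -/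
/-- Rigidity for `J = j • U`: if `j > 0` on `[0,∞)` satisfies the scalar Jacobi equation
`j'' = j (‖U'‖² + a²)`, `j(t) → 0` as `t → ∞`, and `j(t) ≥ j(0) e^{-a t}` on `[0,∞)`,
then `j(t) = j(0) e^{-a t}` and `U'(t) = 0` for all `t ≥ 0`. -/
theorem stmt_9 {E : Type*} [NormedAddCommGroup E] [InnerProductSpace ℝ E]
    (a : ℝ) (ha : 0 < a) (j j' j'' : ℝ → ℝ) (U U' U'' : ℝ → E)
    (hj' : ∀ t, 0 ≤ t → HasDerivAt j (j' t) t)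
    (hj'' : ∀ t, 0 ≤ t → HasDerivAt j' (j'' t) t)
    (hpos : ∀ t, 0 ≤ t → 0 < j t)
    (hU' : ∀ t, HasDerivAt U (U' t) t)
    (hU'' : ∀ t, HasDerivAt U' (U'' t) t)
    (hnorm : ∀ t, ‖U t‖ = 1)
    (heq : ∀ t, 0 ≤ t → j'' t = j t * (‖U' t‖ ^ 2 + a ^ 2))
    (hlim : Filter.Tendsto j Filter.atTop (nhds 0))
    (hlow : ∀ t, 0 ≤ t → j 0 * Real.exp (-a * t) ≤ j t) :
    ∀ t, 0 ≤ t → j t = j 0 * Real.exp (-a * t) ∧ U' t = 0 := by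
  have hE : ∀ t : ℝ, HasDerivAt (fun s => Real.exp (-a * s)) (Real.exp (-a * t) * (-a)) t := by
    intro t
    have h1 : HasDerivAt (fun s : ℝ => -a * s) (-a) t := by
      simpa using (hasDerivAt_id t).const_mul (-a)
    exact h1.exp
  have hf1 : ∀ t, 0 ≤ t → HasDerivAt (fun s => j s - j 0 * Real.exp (-a * s))
      (j' t - j 0 * (Real.exp (-a * t) * (-a))) t :=
    fun t ht => (hj' t ht).sub ((hE t).const_mul (j 0))
  have hf2 : ∀ t, 0 ≤ t → HasDerivAt (fun s => j' s - j 0 * (Real.exp (-a * s) * (-a)))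
      (j'' t - j 0 * (Real.exp (-a * t) * (-a) * (-a))) t :=
    fun t ht => (hj'' t ht).sub (((hE t).mul_const (-a)).const_mul (j 0))
  have hconv : ConvexOn ℝ (Set.Ici 0) (fun s => j s - j 0 * Real.exp (-a * s)) := by
    refine convexOn_of_hasDerivWithinAt2_nonneg (convex_Ici 0)
      (f' := fun s => j' s - j 0 * (Real.exp (-a * s) * (-a)))
      (f'' := fun s => j'' s - j 0 * (Real.exp (-a * s) * (-a) * (-a))) ?_ ?_ ?_ ?_
    · intro t ht
      exact (hf1 t ht).continuousAt.continuousWithinAt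
    · intro t ht
      exact (hf1 t (interior_subset ht)).hasDerivWithinAt
    · intro t ht
      exact (hf2 t (interior_subset ht)).hasDerivWithinAt
    · intro t ht
      have ht0 : 0 ≤ t := interior_subset ht
      have h1 := heq t ht0
      have h2 := mul_nonneg (hpos t ht0).le (sq_nonneg ‖U' t‖)
      have h3 := mul_nonneg (sub_nonneg.2 (hlow t ht0)) (sq_nonneg a)
      simp only [h1]
      nlinarith
  have hexp : Filter.Tendsto (fun s => Real.exp (-a * s)) Filter.atTop (nhds 0) := by
    refine Real.tendsto_exp_atBot.comp ?_
    exact Filter.tendsto_id.const_mul_atTop_of_neg (by linarith)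
  have hflim : Filter.Tendsto (fun s => j s - j 0 * Real.exp (-a * s)) Filter.atTop (nhds 0) := by
    simpa using hlim.sub (hexp.const_mul (j 0))
  have hzero : ∀ t, 0 ≤ t → j t - j 0 * Real.exp (-a * t) = 0 := by
    intro t ht
    refine le_antisymm ?_ (sub_nonneg.2 (hlow t ht))
    refine ge_of_tendsto hflim ?_
    filter_upwards [Filter.eventually_ge_atTop (t + 1)] with s hs
    have hs0 : 0 < s := by linarith
    have h1 : t / s ≤ 1 := by rw [div_le_one hs0]; linarith
    have h0 : 0 ≤ t / s := by positivity
    have h := hconv.2 (Set.mem_Ici.2 le_rfl) (Set.mem_Ici.2 hs0.le)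
      (sub_nonneg.2 h1) h0 (by ring)
    have e : t / s * s = t := by field_simp
    simp only [smul_eq_mul, mul_zero, zero_add, Real.exp_zero, mul_one, sub_self, e] at h
    have hs1 := sub_nonneg.2 (hlow s hs0.le)
    nlinarith
  have key : ∀ (g : ℝ → ℝ) (d t : ℝ), 0 ≤ t → (∀ s, 0 ≤ s → g s = 0) → HasDerivAt g d t →
      d = 0 := by
    intro g d t ht hg hd
    have h1 : HasDerivWithinAt g 0 (Set.Ici t) t :=
      (hasDerivWithinAt_const t (Set.Ici t) (0 : ℝ)).congr
        (fun s hs => hg s (ht.trans hs)) (hg t ht)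
    exact (uniqueDiffOn_Ici t t Set.self_mem_Ici).eq_deriv _ hd.hasDerivWithinAt h1
  have hz1 := fun t ht => key _ _ t ht hzero (hf1 t ht)
  have hz2 := fun t ht => key _ _ t ht hz1 (hf2 t ht)
  intro t ht
  have e0 := sub_eq_zero.1 (hzero t ht)
  refine ⟨e0, ?_⟩
  have e2 := hz2 t ht
  rw [heq t ht] at e2
  have e3 : j t * ‖U' t‖ ^ 2 = 0 := by
    have : j 0 * (Real.exp (-a * t) * (-a) * (-a)) = j t * a ^ 2 := by rw [e0]; ring
    rw [this] at e2
    linarith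
  simpa [(hpos t ht).ne'] using e3
end
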